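/- Let α ∈ (1, 2], let 0 < ε ≤ 1/2, and let q, r ∈ Δ_d satisfy q_j > 0 and r_j / q_j ∈ [1 − ε, 1 + ε] for every j ∈ {1,…,d}. Let ψ_α(x) = (1/(1−α))(1 − Σ_{j=1}^d x_j^α), so ∇ψ_α(x) = ( (α/(α−1)) x_j^{α−1} )_{j∈[d]}. Then (a) ‖∇ψ_α(r) − ∇ψ_α(q)‖_∞ ≤ α(3 − α)ε, and (b) for every y ∈ {1,…,d}, |ℓ_α(q, y) − ℓ_α(r, y)| ≤ 2 α (3 − α) ε. -/

import Mathlib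

open scoped BigOperators

/-- The unscaled α-Tsallis loss: for `α ∈ (1, 2]`,
`ℓ_α(p, y) = (1/(1−α))(α p_y^{α−1} − 1) + ∑_j p_j^α`, and for `α = 1` it is the log loss
`ℓ_1(p, y) = −log p_y`. -/
noncomputable def tsallisLoss {d : ℕ} (α : ℝ) (p : Fin d → ℝ) (y : Fin d) : ℝ :=
  if α = 1 then -Real.log (p y)
  else (1 / (1 - α)) * (α * p y ^ (α - 1) - 1) + ∑ j, p j ^ α

/-!
Bernoulli's inequality, applied to the exponents `s = α - 1` and `1 - s`, turns a relative
perturbation of size `ε` of `x` into a relative perturbation of size `s (2 - s) ε` of `x ^ s`.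
The factor `α / (α - 1)` of the gradient cancels `s`, which leaves `α (3 - α) ε`.
The difference of two losses is a difference of gradient coordinates plus `∑ q_j ^ α - ∑ r_j ^ α`,
and the latter is at most `α ∑ |q_j - r_j| ≤ α ε`, because `x ↦ x ^ α` is `α`-Lipschitz on `[0, 1]`.
-/

section Rpow

variable {a b c s p ε : ℝ}

theorem one_sub_mul_le_one_sub_rpow (hs0 : 0 ≤ s) (hs1 : s ≤ 1) (hε0 : 0 ≤ ε)
    (hε : (2 - s) * ε ≤ 1) : 1 - s * (2 - s) * ε ≤ (1 - ε) ^ s := by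
  have hε1 : 0 ≤ 1 - ε := by nlinarith
  have factor_pos : 0 < 1 - (1 - s) * ε := by
    rcases hε0.eq_or_lt with rfl | hpos
    · simp
    · linarith
  have bernoulli : (1 - ε) ^ (1 - s) ≤ 1 - (1 - s) * ε := by
    simpa [sub_eq_add_neg] using
      rpow_one_add_le_one_add_mul_self (s := -ε) (p := 1 - s) (by linarith) (by linarith)
        (by linarith)
  have gap_nonneg : 0 ≤ s * (1 - s) * ε * (1 - (2 - s) * ε) :=
    mul_nonneg (mul_nonneg (mul_nonneg hs0 (by linarith)) hε0) (by linarith)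
  refine le_of_mul_le_mul_right ?_ factor_pos
  calc (1 - s * (2 - s) * ε) * (1 - (1 - s) * ε)
      = 1 - ε - s * (1 - s) * ε * (1 - (2 - s) * ε) := by ring
    _ ≤ 1 - ε := by linarith
    _ = (1 - ε) ^ s * (1 - ε) ^ (1 - s) := by
        rw [← Real.rpow_add_of_nonneg hε1 hs0 (by linarith), add_sub_cancel, Real.rpow_one]
    _ ≤ (1 - ε) ^ s * (1 - (1 - s) * ε) := by gcongr

theorem abs_rpow_sub_rpow_le_mul_rpow (hs0 : 0 ≤ s) (hs1 : s ≤ 1) (hε0 : 0 ≤ ε)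
    (hε : (2 - s) * ε ≤ 1) (hb : 0 ≤ b) (hab : |a - b| ≤ ε * b) :
    |a ^ s - b ^ s| ≤ s * (2 - s) * ε * b ^ s := by
  obtain ⟨hlo, hhi⟩ := abs_le.1 hab
  have hε1 : 0 ≤ 1 - ε := by nlinarith
  have ha : 0 ≤ a := by linarith [mul_nonneg hε1 hb]
  have lower : (1 - s * (2 - s) * ε) * b ^ s ≤ a ^ s :=
    calc (1 - s * (2 - s) * ε) * b ^ s ≤ (1 - ε) ^ s * b ^ s := by
          gcongr
          exact one_sub_mul_le_one_sub_rpow hs0 hs1 hε0 hε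
      _ = ((1 - ε) * b) ^ s := (Real.mul_rpow hε1 hb).symm
      _ ≤ a ^ s := Real.rpow_le_rpow (mul_nonneg hε1 hb) (by linarith) hs0
  have upper : a ^ s ≤ (1 + s * (2 - s) * ε) * b ^ s :=
    calc a ^ s ≤ ((1 + ε) * b) ^ s := Real.rpow_le_rpow ha (by linarith) hs0
      _ = (1 + ε) ^ s * b ^ s := Real.mul_rpow (by linarith) hb
      _ ≤ (1 + s * ε) * b ^ s := by
          gcongr
          exact rpow_one_add_le_one_add_mul_self (by linarith) hs0 hs1
      _ ≤ (1 + s * (2 - s) * ε) * b ^ s := by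
          gcongr
          exact le_mul_of_one_le_right hs0 (by linarith)
  rw [abs_le]
  constructor <;> linarith

theorem abs_rpow_sub_rpow_le_mul_abs_sub (hp : 1 ≤ p) (ha : a ∈ Set.Icc 0 c)
    (hb : b ∈ Set.Icc 0 c) : |a ^ p - b ^ p| ≤ p * c ^ (p - 1) * |a - b| := by
  refine (convex_Icc 0 c).norm_image_sub_le_of_norm_hasDerivWithin_le
    (fun x _ => (Real.hasDerivAt_rpow_const (Or.inr hp)).hasDerivWithinAt) (fun x hx => ?_) hb ha
  have hderiv : 0 ≤ p * x ^ (p - 1) := mul_nonneg (by linarith) (Real.rpow_nonneg hx.1 _)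
  rw [Real.norm_of_nonneg hderiv]
  gcongr
  exacts [hx.1, hx.2]

theorem abs_sum_rpow_sub_sum_rpow_le {ι : Type*} {t : Finset ι} {f g : ι → ℝ} (hp : 1 ≤ p)
    (hf : ∀ i ∈ t, f i ∈ Set.Icc 0 c) (hg : ∀ i ∈ t, g i ∈ Set.Icc 0 c) :
    |∑ i ∈ t, f i ^ p - ∑ i ∈ t, g i ^ p| ≤ p * c ^ (p - 1) * ∑ i ∈ t, |f i - g i| := by
  rw [← Finset.sum_sub_distrib, Finset.mul_sum]
  exact (Finset.abs_sum_le_sum_abs _ _).trans <|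
    Finset.sum_le_sum fun i hi => abs_rpow_sub_rpow_le_mul_abs_sub hp (hf i hi) (hg i hi)

theorem abs_sub_le_mul_of_div_mem_Icc (hb : 0 < b) (h : a / b ∈ Set.Icc (1 - ε) (1 + ε)) :
    |a - b| ≤ ε * b := by
  have lower := (le_div_iff₀ hb).1 h.1
  have upper := (div_le_iff₀ hb).1 h.2
  rw [abs_le]
  constructor <;> linarith

end Rpow

/-- A coordinate of `∇ψ_α`, where `ψ_α(x) = (1/(1−α))(1 − ∑_j x_j^α)` is the potential that
generates the Tsallis loss; it depends only on the matching coordinate `x` of the argument. -/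
noncomputable def tsallisGrad (α x : ℝ) : ℝ :=
  α / (α - 1) * x ^ (α - 1)

theorem abs_tsallisGrad_sub_le {α ε a b : ℝ} (hα1 : 1 < α) (hα2 : α ≤ 2) (hε0 : 0 ≤ ε)
    (hε : (3 - α) * ε ≤ 1) (hb : 0 ≤ b) (hab : |a - b| ≤ ε * b) :
    |tsallisGrad α a - tsallisGrad α b| ≤ α * (3 - α) * ε * b ^ (α - 1) := by
  have hs : 0 < α - 1 := sub_pos.2 hα1
  have hcoef : 0 ≤ α / (α - 1) := div_nonneg (by linarith) hs.le
  calc |tsallisGrad α a - tsallisGrad α b|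
      = α / (α - 1) * |a ^ (α - 1) - b ^ (α - 1)| := by
        rw [tsallisGrad, tsallisGrad, ← mul_sub, abs_mul, abs_of_nonneg hcoef]
    _ ≤ α / (α - 1) * ((α - 1) * (2 - (α - 1)) * ε * b ^ (α - 1)) := by
        gcongr
        exact abs_rpow_sub_rpow_le_mul_rpow hs.le (by linarith) hε0 (by linarith) hb hab
    _ = α * (3 - α) * ε * b ^ (α - 1) := by
        field_simp
        ring

theorem tsallisLoss_sub_tsallisLoss {d : ℕ} {α : ℝ} (hα : α ≠ 1) (q r : Fin d → ℝ) (y : Fin d) :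
    tsallisLoss α q y - tsallisLoss α r y =
      tsallisGrad α (r y) - tsallisGrad α (q y) + (∑ j, q j ^ α - ∑ j, r j ^ α) := by
  have hcoef : 1 / (1 - α) = -(1 / (α - 1)) := by rw [← neg_sub α 1, div_neg]
  simp only [tsallisLoss, tsallisGrad, if_neg hα, hcoef]
  ring

theorem stmt15_general {d : ℕ} (α ε : ℝ) (hα1 : 1 < α) (hα2 : α ≤ 2)
    (hε0 : 0 ≤ ε) (hε : (3 - α) * ε ≤ 1)
    (q r : Fin d → ℝ) (hq : ∀ j, 0 ≤ q j) (hqsum : ∑ j, q j ≤ 1) (hr : ∀ j, r j ≤ 1)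
    (hqr : ∀ j, |r j - q j| ≤ ε * q j) :
    (∀ j : Fin d,
        |α / (α - 1) * r j ^ (α - 1) - α / (α - 1) * q j ^ (α - 1)| ≤ α * (3 - α) * ε) ∧
    (∀ y : Fin d, |tsallisLoss α q y - tsallisLoss α r y| ≤ α * (4 - α) * ε) := by
  have hq01 (j) : q j ∈ Set.Icc 0 1 :=
    ⟨hq j, (Finset.single_le_sum (fun i _ => hq i) (Finset.mem_univ j)).trans hqsum⟩
  have hr01 (j) : r j ∈ Set.Icc 0 1 := by
    refine ⟨?_, hr j⟩
    have hε1 : ε ≤ 1 := by nlinarith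
    linarith [(abs_le.1 (hqr j)).1, mul_le_of_le_one_left (hq j) hε1]
  have grad_le (j) : |tsallisGrad α (r j) - tsallisGrad α (q j)| ≤ α * (3 - α) * ε :=
    (abs_tsallisGrad_sub_le hα1 hα2 hε0 hε (hq j) (hqr j)).trans <|
      mul_le_of_le_one_right (mul_nonneg (mul_nonneg (by linarith) (by linarith)) hε0)
        (Real.rpow_le_one (hq j) (hq01 j).2 (by linarith))
  have sum_le : |∑ j, q j ^ α - ∑ j, r j ^ α| ≤ α * ε :=
    calc |∑ j, q j ^ α - ∑ j, r j ^ α| ≤ α * 1 ^ (α - 1) * ∑ j, |q j - r j| :=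
          abs_sum_rpow_sub_sum_rpow_le hα1.le (fun j _ => hq01 j) (fun j _ => hr01 j)
      _ ≤ α * 1 ^ (α - 1) * ∑ j, ε * q j := by
          gcongr with j
          exact abs_sub_comm (q j) (r j) ▸ hqr j
      _ ≤ α * ε := by
          rw [Real.one_rpow, mul_one, ← Finset.mul_sum]
          gcongr
          exact mul_le_of_le_one_right hε0 hqsum
  refine ⟨grad_le, fun y => ?_⟩
  rw [tsallisLoss_sub_tsallisLoss hα1.ne']
  linarith [abs_add_le (tsallisGrad α (r y) - tsallisGrad α (q y)) (∑ j, q j ^ α - ∑ j, r j ^ α),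
    grad_le y]

/-- The key estimates from Lemma `binning-new` for the unscaled α-Tsallis loss with
`α ∈ (1, 2]`: if `r_j / q_j ∈ [1−ε, 1+ε]` coordinatewise, then (a) the gradients of
`ψ_α(x) = (1/(1−α))(1 − ∑_j x_j^α)`, namely `∇ψ_α(x)_j = (α/(α−1)) x_j^{α−1}`, are
`α(3−α)ε`-close in sup norm, and (b) `|ℓ_α(q, y) − ℓ_α(r, y)| ≤ 2α(3−α)ε`. -/
theorem stmt15 {d : ℕ} (α ε : ℝ) (hα1 : 1 < α) (hα2 : α ≤ 2)
    (hε0 : 0 < ε) (hε : ε ≤ 1 / 2)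
    (q r : Fin d → ℝ) (hq : q ∈ stdSimplex ℝ (Fin d)) (hr : r ∈ stdSimplex ℝ (Fin d))
    (hqpos : ∀ j, 0 < q j)
    (hratio : ∀ j, 1 - ε ≤ r j / q j ∧ r j / q j ≤ 1 + ε) :
    (∀ j : Fin d,
        |α / (α - 1) * r j ^ (α - 1) - α / (α - 1) * q j ^ (α - 1)| ≤ α * (3 - α) * ε) ∧
    (∀ y : Fin d, |tsallisLoss α q y - tsallisLoss α r y| ≤ 2 * α * (3 - α) * ε) := by
  obtain ⟨grad_le, loss_le⟩ := stmt15_general α ε hα1 hα2 hε0.le (by nlinarith) q r hq.1 hq.2.le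
    (fun j => (mem_Icc_of_mem_stdSimplex hr j).2)
    (fun j => abs_sub_le_mul_of_div_mem_Icc (hqpos j) (hratio j))
  exact ⟨grad_le, fun y => (loss_le y).trans (by gcongr ?_ * ε; nlinarith)⟩
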